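/- Let K be a compact Hausdorff space, δ > 0, and F a nonempty δ-≺-chain in C(K). If I is an initial segment of F with ∅ ≠ I ⊊ F, then the set W_I is nonempty. -/

import Mathlib

open Set Topology Filter

/-- `f ≺ g`: `f ≠ g` and `f` agrees with `g` on the support of `f` (the closure of
the set where `f` is nonzero). -/
def Prec {K : Type*} [TopologicalSpace K] (f g : C(K, ℝ)) : Prop :=
  f ≠ g ∧ ∀ t ∈ closure {t | f t ≠ 0}, f t = g t

/-- `f ≺_δ g`: `f ≺ g` and `‖f - g‖ ≥ δ`. -/
def PrecDelta {K : Type*} [TopologicalSpace K] [CompactSpace K] (δ : ℝ) (f g : C(K, ℝ)) : Prop :=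
  Prec f g ∧ δ ≤ ‖f - g‖

/-- `F` is a `δ`-`≺`-chain. -/
def IsPrecChain {K : Type*} [TopologicalSpace K] [CompactSpace K] (δ : ℝ)
    (F : Set C(K, ℝ)) : Prop :=
  ∀ f ∈ F, ∀ g ∈ F, f ≠ g → PrecDelta δ f g ∨ PrecDelta δ g f

/-- A compact Hausdorff space has the Bishop property (B) if for every `δ > 0`
every `δ`-`≺`-chain in `C(K)` is countable. -/
def HasBishop (K : Type*) [TopologicalSpace K] [CompactSpace K] [T2Space K] : Prop :=
  ∀ δ : ℝ, 0 < δ → ∀ F : Set C(K, ℝ), IsPrecChain δ F → F.Countable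

/-- `I` is an initial segment of the chain `F`. -/
def IsInitialSegment {K : Type*} [TopologicalSpace K] (F I : Set C(K, ℝ)) : Prop :=
  I ⊆ F ∧ ∀ f ∈ F, ∀ g ∈ I, Prec f g → f ∈ I

/-- The set `W_I = ⋂_{f ∈ I} f⁻¹({0}) ∩ ⋂_{g ∈ F∖I} g⁻¹({x : |x| ≥ δ})`. -/
def W {K : Type*} [TopologicalSpace K] (δ : ℝ) (F I : Set C(K, ℝ)) : Set K :=
  (⋂ f ∈ I, (f : C(K, ℝ)) ⁻¹' {0}) ∩ ⋂ g ∈ F \ I, (g : C(K, ℝ)) ⁻¹' {x : ℝ | δ ≤ |x|}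

/-- If `f ≺ g`, then `g` takes the same value as `f` wherever `f` does not vanish. -/
theorem Prec.eq_of_ne_zero {K : Type*} [TopologicalSpace K] {f g : C(K, ℝ)} (h : Prec f g)
    {t : K} (ht : f t ≠ 0) : f t = g t :=
  h.2 t (subset_closure ht)

/-- If `f ≺ g`, then `f` vanishes wherever `g` does. -/
theorem Prec.eq_zero {K : Type*} [TopologicalSpace K] {f g : C(K, ℝ)} (h : Prec f g)
    {t : K} (ht : g t = 0) : f t = 0 := by
  by_contra hne
  exact hne ((h.eq_of_ne_zero hne).trans ht)

/-- If `f ≺_δ g`, there is a point at which `f` vanishes and `|g|` is at least `δ`. -/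
theorem PrecDelta.exists_eq_zero_le_abs {K : Type*} [TopologicalSpace K] [CompactSpace K]
    {δ : ℝ} (hδ : 0 < δ) {f g : C(K, ℝ)} (h : PrecDelta δ f g) :
    ∃ t, f t = 0 ∧ δ ≤ |g t| := by
  obtain ⟨t, ht⟩ : ∃ t, δ ≤ |f t - g t| := by
    by_contra! hlt
    exact h.2.not_gt ((ContinuousMap.norm_lt_iff _ hδ).2 hlt)
  have hft : f t = 0 := by
    by_contra hne
    rw [h.1.eq_of_ne_zero hne, sub_self, abs_zero] at ht
    exact hδ.not_ge ht
  exact ⟨t, hft, by simpa [hft] using ht⟩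

/-- Of any two members of a chain, one has its zeros among the common zeros of both. -/
theorem IsPrecChain.zeros_directed {K : Type*} [TopologicalSpace K] [CompactSpace K]
    {δ : ℝ} {F I : Set C(K, ℝ)} (hF : IsPrecChain δ F) (hIF : I ⊆ F) {f f' : C(K, ℝ)}
    (hf : f ∈ I) (hf' : f' ∈ I) :
    ∃ h ∈ I, ∀ t, h t = 0 → f t = 0 ∧ f' t = 0 := by
  by_cases hne : f = f'
  · subst hne
    exact ⟨f, hf, fun t ht => ⟨ht, ht⟩⟩
  · rcases hF f (hIF hf) f' (hIF hf') hne with h | h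
    · exact ⟨f', hf', fun t ht => ⟨h.1.eq_zero ht, ht⟩⟩
    · exact ⟨f, hf, fun t ht => ⟨ht, h.1.eq_zero ht⟩⟩

/-- Of any two members of a chain, one has absolute value at least `δ` only where both do. -/
theorem IsPrecChain.le_abs_directed {K : Type*} [TopologicalSpace K] [CompactSpace K]
    {δ : ℝ} (hδ : 0 < δ) {F J : Set C(K, ℝ)} (hF : IsPrecChain δ F) (hJF : J ⊆ F)
    {g g' : C(K, ℝ)} (hg : g ∈ J) (hg' : g' ∈ J) :
    ∃ h ∈ J, ∀ t, δ ≤ |h t| → δ ≤ |g t| ∧ δ ≤ |g' t| := by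
  have key {a b : C(K, ℝ)} (h : Prec a b) {t : K} (ht : δ ≤ |a t|) : δ ≤ |b t| :=
    h.eq_of_ne_zero (abs_pos.1 (hδ.trans_le ht)) ▸ ht
  by_cases hne : g = g'
  · subst hne
    exact ⟨g, hg, fun t ht => ⟨ht, ht⟩⟩
  · rcases hF g (hJF hg) g' (hJF hg') hne with h | h
    · exact ⟨g, hg, fun t ht => ⟨ht, key h.1 ht⟩⟩
    · exact ⟨g', hg', fun t ht => ⟨key h.1 ht, ht⟩⟩

/-- **Proposition 2.1 (i).** If `I` is an initial segment of a nonempty `δ`-`≺`-chain `F`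
with `∅ ≠ I ⊊ F`, then `W_I` is nonempty. -/
theorem stmt1 {K : Type*} [TopologicalSpace K] [CompactSpace K] [T2Space K]
    (δ : ℝ) (hδ : 0 < δ) (F : Set C(K, ℝ)) (hFne : F.Nonempty) (hF : IsPrecChain δ F)
    (I : Set C(K, ℝ)) (hI : IsInitialSegment F I) (hIne : I.Nonempty) (hIF : I ⊂ F) :
    (W δ F I).Nonempty := by
  obtain ⟨g₀, hg₀F, hg₀I⟩ := exists_of_ssubset hIF
  obtain ⟨f₀, hf₀⟩ := hIne
  let S : I × ↥(F \ I) → Set K := fun p => {t | p.1.1 t = 0} ∩ {t | δ ≤ |p.2.1 t|}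
  have : Nonempty (I × ↥(F \ I)) := ⟨⟨f₀, hf₀⟩, ⟨g₀, hg₀F, hg₀I⟩⟩
  have hclosed (p) : IsClosed (S p) :=
    (isClosed_eq p.1.1.continuous continuous_const).inter
      (isClosed_le continuous_const p.2.1.continuous.abs)
  have hdir : Directed (· ⊇ ·) S := by
    rintro ⟨⟨f, hf⟩, ⟨g, hg⟩⟩ ⟨⟨f', hf'⟩, ⟨g', hg'⟩⟩
    obtain ⟨u, hu, hu0⟩ := hF.zeros_directed hI.1 hf hf'
    obtain ⟨v, hv, hvδ⟩ := hF.le_abs_directed hδ sdiff_subset hg hg'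
    exact ⟨⟨⟨u, hu⟩, ⟨v, hv⟩⟩, fun t ht => ⟨(hu0 t ht.1).1, (hvδ t ht.2).1⟩,
      fun t ht => ⟨(hu0 t ht.1).2, (hvδ t ht.2).2⟩⟩
  have hne (p) : (S p).Nonempty := by
    obtain ⟨⟨f, hf⟩, ⟨g, hgF, hgI⟩⟩ := p
    have hfg : f ≠ g := fun h => hgI (h ▸ hf)
    rcases hF f (hI.1 hf) g hgF hfg with h | h
    · exact h.exists_eq_zero_le_abs hδ
    · exact absurd (hI.2 g hgF f hf h.1) hgI
  obtain ⟨t, ht⟩ := IsCompact.nonempty_iInter_of_directed_nonempty_isCompact_isClosed S hdir hne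
    (fun p => (hclosed p).isCompact) hclosed
  rw [mem_iInter] at ht
  refine ⟨t, mem_iInter₂.2 fun f hf => ?_, mem_iInter₂.2 fun g hg => ?_⟩
  · exact (ht ⟨⟨f, hf⟩, ⟨g₀, hg₀F, hg₀I⟩⟩).1
  · exact (ht ⟨⟨f₀, hf₀⟩, ⟨g, hg⟩⟩).2
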